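/- arXiv:1606.07881 — 3 statements merged into one kernel-verified Lean document; each statement's English description precedes it below -/
import Mathlib

section
/- For every countable partial order (P, ≤) there exists a family (G_p)_{p ∈ P} of finite simple graphs such that for all p, q ∈ P one has p ≤ q if and only if there exists a graph homomorphism from G_p to G_q. (The homomorphism order of finite simple graphs is countably universal.) -/
/-- The symmetric connection set `{±1, ±2, ±6}`. Homomorphisms between the circulant graphs it
defines on large cyclic groups are of the form `x ↦ ±x + c`. -/
def steps : Finset ℤ := {1, 2, 6, -1, -2, -6}

lemma neg_mem_steps {s : ℤ} (hs : s ∈ steps) : -s ∈ steps := by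
  simp only [steps, Finset.mem_insert, Finset.mem_singleton] at hs ⊢
  lia

lemma bounds_of_mem_steps {s : ℤ} (hs : s ∈ steps) : -6 ≤ s ∧ s ≤ 6 ∧ s ≠ 0 := by
  simp only [steps, Finset.mem_insert, Finset.mem_singleton] at hs
  lia

/-- A local configuration of increments compatible with the connection set is constant. -/
lemma steps_rigid_window : ∀ a ∈ steps, ∀ b ∈ steps, a + b ∈ steps → ∀ c ∈ steps, b + c ∈ steps →
    ∀ d ∈ steps, c + d ∈ steps → ∀ e ∈ steps, d + e ∈ steps → ∀ f ∈ steps, e + f ∈ steps →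
    a + b + c + d + e + f ∈ steps → b = a ∧ (a = 1 ∨ a = -1) := by
  decide

/-- The disjoint union, over `a ∈ A`, of the circulant graphs on `ZMod a` with connection set
`steps`. -/
def circulantUnion (A : Finset ℕ) : SimpleGraph (Σ a : A, ZMod a) where
  Adj x y := x ≠ y ∧ ∃ s ∈ steps, y = ⟨x.1, x.2 + s⟩
  symm := ⟨by
    rintro ⟨a, u⟩ y ⟨hne, s, hs, rfl⟩
    exact ⟨hne.symm, -s, neg_mem_steps hs, by simp⟩⟩
  loopless := ⟨fun _ h => h.1 rfl⟩

lemma intCast_zmod_inj {b : ℕ} {s t : ℤ} (h : (s : ZMod b) = t) (hlt : |s - t| < b) : s = t := by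
  have h0 : ((s - t : ℤ) : ZMod b) = 0 := by simp [h]
  rw [ZMod.intCast_zmod_eq_zero_iff_dvd] at h0
  exact sub_eq_zero.1 (Int.eq_zero_of_abs_lt_dvd h0 hlt)

lemma circulantUnion_adj_add {A : Finset ℕ} (a : A) (ha : 43 ≤ (a : ℕ)) (u : ZMod a) {s : ℤ}
    (hs : s ∈ steps) : (circulantUnion A).Adj ⟨a, u⟩ ⟨a, u + s⟩ := by
  refine ⟨fun h => ?_, s, hs, rfl⟩
  have h' : (s : ZMod a) = (0 : ℤ) := by simpa using h
  obtain ⟨h₁, h₂, h₃⟩ := bounds_of_mem_steps hs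
  exact h₃ (intCast_zmod_inj h' (by rw [abs_lt]; lia))

/-- A sequence in `ZMod b` sending differences in `{1, 2, 6}` into `steps` is an arithmetic
progression with difference `±1`. -/
lemma eq_add_mul_of_map_steps {b : ℕ} (hb : 43 ≤ b) (u : ℕ → ZMod b)
    (hu : ∀ (n k : ℕ), (k : ℤ) ∈ steps → ∃ s ∈ steps, u (n + k) = u n + ((s : ℤ) : ZMod b)) :
    ∃ c : ℤ, (c = 1 ∨ c = -1) ∧ ∀ n : ℕ, u n = u 0 + n * c := by
  choose d hd hud using fun n => hu n 1 (by decide)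
  have h_two : ∀ n, d n + d (n + 1) ∈ steps := fun n => by
    obtain ⟨t, ht, h⟩ := hu n 2 (by decide)
    have e₀ := hud n
    have e₁ := hud (n + 1)
    have : d n + d (n + 1) = t := by
      refine intCast_zmod_inj (b := b) ?_ ?_
      · rw [add_assoc] at e₁
        rw [h, e₀] at e₁
        push_cast
        linear_combination -e₁
      · have := bounds_of_mem_steps (hd n)
        have := bounds_of_mem_steps (hd (n + 1))
        have := bounds_of_mem_steps ht
        rw [abs_lt]; lia
    rwa [this]
  have h_six : ∀ n, d n + d (n + 1) + d (n + 2) + d (n + 3) + d (n + 4) + d (n + 5) ∈ steps :=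
    fun n => by
    obtain ⟨t, ht, h⟩ := hu n 6 (by decide)
    have : d n + d (n + 1) + d (n + 2) + d (n + 3) + d (n + 4) + d (n + 5) = t := by
      refine intCast_zmod_inj (b := b) ?_ ?_
      · have e₀ := hud n
        have e₁ := hud (n + 1)
        have e₂ := hud (n + 2)
        have e₃ := hud (n + 3)
        have e₄ := hud (n + 4)
        have e₅ := hud (n + 5)
        simp only [add_assoc, Nat.reduceAdd] at e₁ e₂ e₃ e₄ e₅
        push_cast
        linear_combination h - e₀ - e₁ - e₂ - e₃ - e₄ - e₅
      · have := bounds_of_mem_steps (hd n)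
        have := bounds_of_mem_steps (hd (n + 1))
        have := bounds_of_mem_steps (hd (n + 2))
        have := bounds_of_mem_steps (hd (n + 3))
        have := bounds_of_mem_steps (hd (n + 4))
        have := bounds_of_mem_steps (hd (n + 5))
        have := bounds_of_mem_steps ht
        rw [abs_lt]; lia
    rwa [this]
  have h_const : ∀ n, d (n + 1) = d n ∧ (d n = 1 ∨ d n = -1) := fun n =>
    steps_rigid_window _ (hd n) _ (hd (n + 1)) (h_two n) _ (hd (n + 2)) (h_two (n + 1))
      _ (hd (n + 3)) (h_two (n + 2)) _ (hd (n + 4)) (h_two (n + 3)) _ (hd (n + 5)) (h_two (n + 4))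
      (h_six n)
  have h_all : ∀ n, d n = d 0 := fun n => by
    induction n with
    | zero => rfl
    | succ n ih => rw [(h_const n).1, ih]
  refine ⟨d 0, (h_const 0).2, fun n => ?_⟩
  induction n with
  | zero => simp
  | succ n ih =>
    rw [hud, ih, h_all n]
    push_cast
    ring

/-- Homomorphisms between unions of circulant graphs are governed by divisibility. -/
theorem nonempty_circulantUnion_hom_iff {A B : Finset ℕ} (hA : ∀ a ∈ A, 43 ≤ a)
    (hB : ∀ b ∈ B, 43 ≤ b) :
    Nonempty (circulantUnion A →g circulantUnion B) ↔ ∀ a ∈ A, ∃ b ∈ B, b ∣ a := by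
  constructor
  · rintro ⟨f⟩ a ha
    have h_adj : ∀ (x : ZMod a) (s : ℤ), s ∈ steps →
        (circulantUnion B).Adj (f ⟨⟨a, ha⟩, x⟩) (f ⟨⟨a, ha⟩, x + s⟩) := fun x s hs =>
      f.map_rel (circulantUnion_adj_add ⟨a, ha⟩ (hA a ha) x hs)
    obtain ⟨b, hb⟩ : ∃ b, (f ⟨⟨a, ha⟩, 0⟩).1 = b := ⟨_, rfl⟩
    have h_lift : ∀ n : ℕ, ∃ v : ZMod b, f ⟨⟨a, ha⟩, (n : ZMod a)⟩ = ⟨b, v⟩ := fun n => by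
      induction n with
      | zero => subst hb; exact ⟨(f ⟨⟨a, ha⟩, 0⟩).2, by simp⟩
      | succ n ih =>
        obtain ⟨v, hv⟩ := ih
        obtain ⟨-, s, -, h⟩ := h_adj n 1 (by decide)
        rw [hv] at h
        exact ⟨v + s, by simpa using h⟩
    choose u hu using h_lift
    obtain ⟨c, hc, hlin⟩ := eq_add_mul_of_map_steps (hB b b.2) u fun n k hk => by
      obtain ⟨-, s, hs, h⟩ := h_adj n k hk
      have hnk := hu (n + k)
      push_cast at h hnk
      rw [hnk, hu] at h
      exact ⟨s, hs, by simpa using h⟩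
    refine ⟨b, b.2, ?_⟩
    have h_period : u a = u 0 := by
      have h₀ := hu a
      have h₁ := hu 0
      simp only [ZMod.natCast_self, Nat.cast_zero] at h₀ h₁
      simpa using h₀.symm.trans h₁
    have h_zero : ((a : ℕ) : ZMod b) = 0 := by
      have := hlin a
      rw [h_period] at this
      rcases hc with rfl | rfl <;> simpa using this
    exact (ZMod.natCast_eq_zero_iff _ _).1 h_zero
  · intro h
    choose g hg hdvd using h
    refine ⟨⟨fun x => ⟨⟨g x.1 x.1.2, hg _ _⟩, ZMod.castHom (hdvd x.1 x.1.2) _ x.2⟩, ?_⟩⟩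
    rintro ⟨a, x⟩ _ ⟨-, s, hs, rfl⟩
    simp only [map_add, map_intCast]
    exact circulantUnion_adj_add ⟨g a a.2, hg _ _⟩ (hB _ (hg _ _)) _ hs

/-- Every countable partial order embeds into the finite sets of large natural numbers, where
`A` lies below `B` if every element of `A` is a multiple of an element of `B`. -/
theorem exists_finset_dvd_embedding (P : Type*) [Countable P] [PartialOrder P] (N : ℕ) :
    ∃ A : P → Finset ℕ, (∀ p, ∀ a ∈ A p, N ≤ a) ∧
      ∀ p q : P, p ≤ q ↔ ∀ a ∈ A p, ∃ b ∈ A q, b ∣ a := by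
  classical
  obtain ⟨e, he⟩ := Countable.exists_injective_nat P
  have hfin : ∀ p : P, {k : P | e k ≤ e p}.Finite := fun p =>
    (Set.finite_Iic (e p)).preimage he.injOn
  let ℓ : P → ℕ := fun p => Nat.nth Nat.Prime (e p + N)
  have hℓ_prime : ∀ p, (ℓ p).Prime := fun p => Nat.prime_nth_prime _
  have hℓ_inj : Function.Injective ℓ := fun p q h =>
    he (Nat.add_right_cancel (Nat.nth_injective Nat.infinite_setOfPred_prime h))
  have hℓ_ge : ∀ p, N ≤ ℓ p := fun p => by
    have := Nat.add_two_le_nth_prime (e p + N)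
    simp only [ℓ]
    lia
  let m : P → ℕ := fun k => ∏ j ∈ (hfin k).toFinset with k ≤ j, ℓ j
  have hm : ∀ k l, m l ∣ m k ↔ k ≤ l ∧ e l ≤ e k := fun k l => by
    constructor
    · intro h
      have hl : ℓ l ∣ m k := (Finset.dvd_prod_of_mem ℓ (by simp)).trans h
      obtain ⟨j, hj, hlj⟩ := ((hℓ_prime l).prime.dvd_finsetProd_iff _).1 hl
      obtain rfl := hℓ_inj ((Nat.prime_dvd_prime_iff_eq (hℓ_prime l) (hℓ_prime j)).1 hlj)
      simpa [and_comm] using hj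
    · rintro ⟨hkl, hlk⟩
      refine Finset.prod_dvd_prod_of_subset _ _ _ fun j hj => ?_
      simp only [Finset.mem_filter, Set.Finite.mem_toFinset, Set.mem_ofPred_eq] at hj ⊢
      exact ⟨hj.1.trans hlk, hkl.trans hj.2⟩
  refine ⟨fun p => {k ∈ (hfin p).toFinset | k ≤ p}.image m, fun p a ha => ?_, fun p q => ?_⟩
  · obtain ⟨k, -, rfl⟩ := Finset.mem_image.1 ha
    have hpos : 0 < m k := Finset.prod_pos fun j _ => (hℓ_prime j).pos
    exact (hℓ_ge k).trans (Nat.le_of_dvd hpos (Finset.dvd_prod_of_mem ℓ (by simp)))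
  · simp only [Finset.forall_mem_image, Finset.exists_mem_image, Finset.mem_filter,
      Set.Finite.mem_toFinset, Set.mem_ofPred_eq, hm]
    constructor
    · rintro hpq k ⟨-, hkp⟩
      rcases le_total (e k) (e q) with hk | hk
      · exact ⟨k, ⟨hk, hkp.trans hpq⟩, le_rfl, le_rfl⟩
      · exact ⟨q, ⟨le_rfl, le_rfl⟩, hkp.trans hpq, hk⟩
    · intro h
      obtain ⟨l, ⟨-, hlq⟩, hpl, -⟩ := h ⟨le_rfl, le_rfl⟩
      exact hpl.trans hlq

/-- The homomorphism order of finite simple graphs is countably universal: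
every countable partial order embeds into it. -/
theorem graph_hom_order_universal (P : Type*) [Countable P] [PartialOrder P] :
    ∃ (V : P → Type) (_ : ∀ p, Fintype (V p)) (G : ∀ p, SimpleGraph (V p)),
      ∀ p q : P, p ≤ q ↔ Nonempty (G p →g G q) := by
  obtain ⟨A, hA, hle⟩ := exists_finset_dvd_embedding P 43
  have : ∀ (p : P) (a : A p), NeZero (a : ℕ) := fun p a => ⟨by have := hA p a a.2; lia⟩
  refine ⟨fun p => Σ a : A p, ZMod a, fun p => inferInstance, fun p => circulantUnion (A p),
    fun p q => ?_⟩
  rw [nonempty_circulantUnion_hom_iff (hA p) (hA q), hle]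
end

section
/- Let G₁ and G₂ be finite simple graphs with G₁ nonempty, such that G₁ ⟶ G₂ but not G₂ ⟶ G₁, and such that it is not the case that G₁ has no edges and G₂ is 2-colorable (i.e. the pair (G₁,G₂) is not the gap (K₁,K₂) up to homomorphism equivalence). Then for every countable partial order (P, ≤) there exists a family (H_p)_{p ∈ P} of finite simple graphs such that for every p ∈ P one has G₁ ⟶ H_p, H_p ⟶ G₂, not H_p ⟶ G₁, not G₂ ⟶ H_p, and for all p, q ∈ P one has p ≤ q if and only if H_p ⟶ H_q. (Fractal property: every non-gap interval of the homomorphism order is universal.) -/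
/-! ### Graphs of large chromatic number and large odd girth -/

/-- Iterated arc digraphs of transitive tournaments: the labels `l 0 v, …, l k v` of a vertex form
an increasing tuple, and arcs shift these tuples. -/
theorem exists_shift_digraph (k : ℕ) : ∀ (C : Type) [Finite C],
    ∃ (V : Type) (_ : Finite V) (r : V → V → Prop) (l : ℕ → V → ℕ),
      (∀ u v, r u v → l k u < l k v) ∧
      (∀ u v, r u v → ∀ i < k, l i v = l (i + 1) u) ∧
      (∀ v, ∀ i < k, l i v < l (i + 1) v) ∧
      ∀ c : V → C, ∃ u v, r u v ∧ c u = c v := by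
  induction k with
  | zero =>
    intro C _
    have := Fintype.ofFinite C
    refine ⟨Fin (Fintype.card C + 1), inferInstance, fun u v => u < v, fun _ v => v,
      fun u v h => h, by simp, by simp, fun c => ?_⟩
    obtain ⟨u, v, huv, hc⟩ := Fintype.exists_ne_map_eq_of_card_lt c (by simp)
    rcases lt_or_gt_of_ne huv with h | h
    · exact ⟨u, v, h, hc⟩
    · exact ⟨v, u, h, hc.symm⟩
  | succ k ih =>
    intro C _
    obtain ⟨V, _, r, l, h1, h2, h3, h4⟩ := ih (Set C)
    refine ⟨{p : V × V // r p.1 p.2}, inferInstance, fun a b => a.1.2 = b.1.1,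
      fun i a => if i ≤ k then l i a.1.1 else l k a.1.2, ?_, ?_, ?_, ?_⟩
    · rintro ⟨⟨u, v⟩, huv⟩ ⟨⟨v', w⟩, hvw⟩ rfl
      simpa using h1 _ _ hvw
    · rintro ⟨⟨u, v⟩, huv⟩ ⟨⟨v', w⟩, hvw⟩ h i hi
      obtain rfl : v = v' := h
      rcases (Nat.lt_succ_iff.1 hi).lt_or_eq with h | rfl
      · simpa [h.le, Nat.succ_le_of_lt h] using h2 _ _ huv i h
      · simp
    · rintro ⟨⟨u, v⟩, huv⟩ i hi
      rcases (Nat.lt_succ_iff.1 hi).lt_or_eq with h | rfl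
      · simpa [h.le, Nat.succ_le_of_lt h] using h3 u i h
      · simpa using h1 _ _ huv
    · intro c
      obtain ⟨u, v, huv, he⟩ := h4 fun u => {x | ∃ (w : V) (h : r u w), c ⟨(u, w), h⟩ = x}
      have hm : c ⟨(u, v), huv⟩ ∈ {x | ∃ (w : V) (h : r u w), c ⟨(u, w), h⟩ = x} := ⟨v, huv, rfl⟩
      rw [he] at hm
      obtain ⟨w, hvw, hc⟩ := hm
      exact ⟨⟨(u, v), huv⟩, ⟨(v, w), hvw⟩, rfl, hc.symm⟩

/-- Along a walk of length `L` the tuple of labels is shifted by some `h` of the same parity. -/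
theorem exists_shift_of_walk {V : Type} {r : V → V → Prop} {l : ℕ → V → ℕ} {k : ℕ}
    (h2 : ∀ u v, r u v → ∀ i < k, l i v = l (i + 1) u) {u v : V}
    (p : (SimpleGraph.fromRel r).Walk u v) :
    ∃ h : ℤ, |h| ≤ p.length ∧ Even (h - p.length) ∧
      ∀ i j : ℕ, (i : ℤ) = j + h → p.length ≤ j → j + p.length ≤ k → l j v = l i u := by
  induction p with
  | nil =>
    refine ⟨0, by simp, by simp, fun i j hij _ _ => ?_⟩
    obtain rfl : i = j := by simpa using hij
    rfl
  | @cons u u' v hadj p ih =>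
    obtain ⟨h, hb, he, hl⟩ := ih
    rw [abs_le] at hb
    rcases ((SimpleGraph.fromRel_adj r u u').1 hadj).2 with hr | hr
    · refine ⟨h + 1, ?_, ?_, fun i j hij h3 h4 => ?_⟩
      · rw [abs_le, SimpleGraph.Walk.length_cons]; push_cast; omega
      · obtain ⟨m, hm⟩ := he
        exact ⟨m, by rw [SimpleGraph.Walk.length_cons]; push_cast; omega⟩
      · rw [SimpleGraph.Walk.length_cons] at h3 h4
        obtain ⟨i, rfl⟩ : ∃ i', i = i' + 1 := ⟨i - 1, by omega⟩
        rw [hl i j (by push_cast at hij; omega) (by omega) (by omega), h2 _ _ hr i (by omega)]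
    · refine ⟨h - 1, ?_, ?_, fun i j hij h3 h4 => ?_⟩
      · rw [abs_le, SimpleGraph.Walk.length_cons]; push_cast; omega
      · obtain ⟨m, hm⟩ := he
        exact ⟨m - 1, by rw [SimpleGraph.Walk.length_cons]; push_cast; omega⟩
      · rw [SimpleGraph.Walk.length_cons] at h3 h4
        rw [hl (i + 1) j (by push_cast; omega) (by omega) (by omega), h2 _ _ hr i (by omega)]

/-- There are finite graphs of arbitrarily large chromatic number without short odd closed walks. -/
theorem exists_not_colorable_even_closed_walks (N : ℕ) :
    ∃ (V : Type) (_ : Fintype V) (G : SimpleGraph V), ¬ G.Colorable N ∧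
      ∀ (u : V) (p : G.Walk u u), p.length ≤ N → Even p.length := by
  obtain ⟨V, _, r, l, h1, h2, h3, h4⟩ := exists_shift_digraph (2 * N) (Fin N)
  refine ⟨V, Fintype.ofFinite V, SimpleGraph.fromRel r, ?_, fun u p hp => ?_⟩
  · rintro ⟨c⟩
    obtain ⟨u, v, huv, hc⟩ := h4 c
    refine c.valid ((SimpleGraph.fromRel_adj r u v).2 ⟨?_, Or.inl huv⟩) hc
    rintro rfl
    exact (h1 u u huv).false
  · obtain ⟨h, hb, he, hl⟩ := exists_shift_of_walk h2 p
    rw [abs_le] at hb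
    have hmono : ∀ i j, i < j → j ≤ 2 * N → l i u < l j u := by
      intro i j hij
      induction j, hij using Nat.le_induction with
      | base => exact fun hj => h3 u i hj
      | succ j _ ih => exact fun hj => (ih (by omega)).trans (h3 u j hj)
    obtain ⟨i, hi⟩ : ∃ i : ℕ, (i : ℤ) = N + h := ⟨(N + h).toNat, by omega⟩
    have hlu := hl i N hi hp (by omega)
    have hiN : i = N := by
      rcases lt_trichotomy i N with hlt | heq | hgt
      · have := hmono i N hlt (by omega); omega
      · exact heq
      · have := hmono N i hgt (by omega); omega
    obtain rfl : h = 0 := by omega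
    simpa using he

/-- A graph is bipartite if all its closed walks of length at most twice its order are even. -/
theorem SimpleGraph.colorable_two_of_even_closed_walks {V : Type*} [Fintype V]
    (G : SimpleGraph V)
    (h : ∀ (u : V) (p : G.Walk u u), p.length ≤ 2 * Fintype.card V → Even p.length) :
    G.Colorable 2 := by
  classical
  let root : V → V := fun v => (G.connectedComponentMk v).out
  have hroot : ∀ v, G.Reachable (root v) v := fun v =>
    SimpleGraph.ConnectedComponent.exact (Quot.out_eq _)
  have hpath : ∀ v, ∃ p : G.Walk (root v) v, p.length < Fintype.card V := by
    intro v
    obtain ⟨p⟩ := hroot v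
    exact ⟨p.toPath, p.toPath.2.length_lt⟩
  choose p hp using hpath
  have hcol : G.Coloring Bool := by
    refine SimpleGraph.Coloring.mk (fun v => decide (Even (p v).length)) fun {u v} huv he => ?_
    have hr : root v = root u := by
      simp only [root]
      rw [SimpleGraph.ConnectedComponent.sound huv.reachable]
    let q : G.Walk (root u) v := (p v).copy hr rfl
    have hq : q.length = (p v).length := SimpleGraph.Walk.length_copy _ _ _
    have hev := h (root u) ((p u).append (SimpleGraph.Walk.cons huv q.reverse)) (by
      simp only [SimpleGraph.Walk.length_append, SimpleGraph.Walk.length_cons,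
        SimpleGraph.Walk.length_reverse, hq]
      have := hp u
      have := hp v
      omega)
    simp only [SimpleGraph.Walk.length_append, SimpleGraph.Walk.length_cons,
        SimpleGraph.Walk.length_reverse, hq] at hev
    simp only [decide_eq_decide] at he
    grind
  simpa using hcol.colorable

/-! ### Embedding countable orders into lattices -/

section Lattice

variable {L : Type*} [Lattice L] [BoundedOrder L]

/-- An independent sequence exists as soon as every finite family of non-inequalities can be
preserved under meets and joins with a new element. -/
theorem exists_independent_seq {y : ℕ → L} (hL : ¬ (⊤ : L) ≤ ⊥)
    (hy : ∀ a b : L, ¬ a ≤ b → ∀ᶠ n in Filter.atTop, ¬ a ⊓ y n ≤ b ∧ ¬ a ≤ y n ⊔ b) :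
    ∃ x : ℕ → L, ∀ S T : Finset ℕ, Disjoint S T → ¬ S.inf x ≤ T.sup x := by
  classical
  have hstep : ∀ F : Finset (L × L), ∃ z : L, ∀ q ∈ F, ¬ q.1 ≤ q.2 →
      ¬ z ⊓ q.1 ≤ q.2 ∧ ¬ q.1 ≤ z ⊔ q.2 := by
    intro F
    have : ∀ᶠ n in Filter.atTop, ∀ q ∈ F, ¬ q.1 ≤ q.2 →
        ¬ y n ⊓ q.1 ≤ q.2 ∧ ¬ q.1 ≤ y n ⊔ q.2 := by
      refine (Filter.eventually_all_finset F).2 fun q _ => ?_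
      by_cases hq : q.1 ≤ q.2
      · simp [hq]
      · filter_upwards [hy _ _ hq] with n hn _
        rwa [inf_comm]
    obtain ⟨n, hn⟩ := this.exists
    exact ⟨y n, hn⟩
  choose z hz using hstep
  let pairs : (n : ℕ) → ((i : ℕ) → i < n → L) → Finset (L × L) := fun n f =>
    ((Finset.range n).powerset ×ˢ (Finset.range n).powerset).image fun q =>
      (q.1.inf fun i => if h : i < n then f i h else ⊤,
        q.2.sup fun i => if h : i < n then f i h else ⊤)
  let x : ℕ → L := fun n =>
    Nat.strongRec (motive := fun _ => L) (fun n f => z (pairs n f)) n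
  have hx : ∀ n, x n = z (pairs n fun i _ => x i) := by
    intro n
    simp only [x]
    rw [Nat.strongRec]
  have hxn : ∀ n, ∀ S ⊆ Finset.range n, ∀ T ⊆ Finset.range n, ¬ S.inf x ≤ T.sup x →
      ¬ x n ⊓ S.inf x ≤ T.sup x ∧ ¬ S.inf x ≤ x n ⊔ T.sup x := by
    intro n S hS T hT
    rw [hx n]
    refine hz _ (S.inf x, T.sup x) (Finset.mem_image.2 ⟨(S, T), by simp [hS, hT], ?_⟩)
    refine Prod.ext (Finset.inf_congr rfl fun i hi => ?_) (Finset.sup_congr rfl fun i hi => ?_)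
    · rw [dif_pos (Finset.mem_range.1 (hS hi))]
    · rw [dif_pos (Finset.mem_range.1 (hT hi))]
  have main : ∀ n, ∀ S ⊆ Finset.range n, ∀ T ⊆ Finset.range n, Disjoint S T →
      ¬ S.inf x ≤ T.sup x := by
    intro n
    induction n with
    | zero =>
      intro S hS T hT _
      obtain rfl : S = ∅ := by simpa using hS
      obtain rfl : T = ∅ := by simpa using hT
      simpa using hL
    | succ n ih =>
      intro S hS T hT hST
      rw [Finset.range_add_one, Finset.subset_insert_iff] at hS hT
      have h := ih _ hS _ hT (hST.mono (Finset.erase_subset _ _) (Finset.erase_subset _ _))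
      have h' := hxn n _ hS _ hT h
      by_cases hnS : n ∈ S
      · have hnT : n ∉ T := Finset.disjoint_left.1 hST hnS
        rw [← Finset.insert_erase hnS, ← Finset.erase_eq_of_notMem hnT, Finset.inf_insert]
        exact h'.1
      · by_cases hnT : n ∈ T
        · rw [← Finset.insert_erase hnT, ← Finset.erase_eq_of_notMem hnS, Finset.sup_insert]
          exact h'.2
        · rwa [Finset.erase_eq_of_notMem hnS, Finset.erase_eq_of_notMem hnT] at h
  refine ⟨x, fun S T hST => main ((S ∪ T).sup id + 1) S ?_ T ?_ hST⟩
  · exact fun i hi => Finset.mem_range_succ_iff.2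
      (Finset.le_sup (f := id) (Finset.mem_union_left T hi))
  · exact fun i hi => Finset.mem_range_succ_iff.2
      (Finset.le_sup (f := id) (Finset.mem_union_right S hi))

/-- A lattice with an independent sequence embeds every preorder on `ℕ`. -/
theorem exists_embedding_nat_of_independent {x : ℕ → L}
    (hx : ∀ S T : Finset ℕ, Disjoint S T → ¬ S.inf x ≤ T.sup x)
    (r : ℕ → ℕ → Prop) (hrefl : ∀ i, r i i) (htrans : ∀ i j k, r i j → r j k → r i k) :
    ∃ f : ℕ → L, (∀ i, ¬ f i ≤ ⊥ ∧ ¬ ⊤ ≤ f i) ∧ ∀ i j, r i j ↔ f i ≤ f j := by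
  classical
  let f : ℕ → L := fun n => Nat.strongRec (motive := fun _ => L) (fun n f =>
    (x n ⊔ ((Finset.range n).filter (r · n)).sup fun i => if h : i < n then f i h else ⊥) ⊓
      ((Finset.range n).filter (r n)).inf fun i => if h : i < n then f i h else ⊤) n
  have hf : ∀ n, f n = (x n ⊔ ((Finset.range n).filter (r · n)).sup f) ⊓
      ((Finset.range n).filter (r n)).inf f := by
    intro n
    have : f n = (x n ⊔ ((Finset.range n).filter (r · n)).sup
        fun i => if _ : i < n then f i else ⊥) ⊓
      ((Finset.range n).filter (r n)).inf fun i => if _ : i < n then f i else ⊤ := by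
      simp only [f]
      rw [Nat.strongRec]
    rw [this]
    congr 1
    · congr 1
      refine Finset.sup_congr rfl fun i hi => ?_
      rw [dif_pos (Finset.mem_range.1 (Finset.mem_filter.1 hi).1)]
    · refine Finset.inf_congr rfl fun i hi => ?_
      rw [dif_pos (Finset.mem_range.1 (Finset.mem_filter.1 hi).1)]
  have hmono : ∀ n, ∀ i < n, (r i n → f i ≤ f n) ∧ (r n i → f n ≤ f i) := by
    intro n
    induction n using Nat.strong_induction_on with
    | _ n ih =>
      intro i hi
      refine ⟨fun h => ?_, fun h => ?_⟩
      · rw [hf n]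
        refine le_inf (le_sup_of_le_right (Finset.le_sup (by simp [hi, h])))
          (Finset.le_inf fun j hj => ?_)
        rw [Finset.mem_filter, Finset.mem_range] at hj
        have hij := htrans _ _ _ h hj.2
        rcases lt_trichotomy i j with hlt | rfl | hgt
        · exact (ih j hj.1 i hlt).1 hij
        · exact le_rfl
        · exact (ih i hi j hgt).2 hij
      · rw [hf n]
        exact inf_le_right.trans (Finset.inf_le (by simp [hi, h]))
  have heval : ∀ U : ℕ → Prop, (∀ i j, r i j → U i → U j) → ∀ n, ∀ j < n,
      (U j → ((Finset.range n).filter U).inf x ≤ f j) ∧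
      (¬ U j → f j ≤ ((Finset.range n).filter (¬ U ·)).sup x) := by
    intro U hU n j
    induction j using Nat.strong_induction_on with
    | _ j ih =>
      intro hj
      rw [hf j]
      refine ⟨fun h => le_inf (le_sup_of_le_left (Finset.inf_le (by simp [hj, h])))
        (Finset.le_inf fun i hi => ?_), fun h => inf_le_left.trans (sup_le
        (Finset.le_sup (by simp [hj, h])) (Finset.sup_le fun i hi => ?_))⟩
      · rw [Finset.mem_filter, Finset.mem_range] at hi
        exact (ih i hi.1 (by omega)).1 (hU _ _ hi.2 h)
      · rw [Finset.mem_filter, Finset.mem_range] at hi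
        exact (ih i hi.1 (by omega)).2 fun h' => h (hU _ _ hi.2 h')
  refine ⟨f, fun i => ⟨fun h => ?_, fun h => ?_⟩, fun i j => ⟨fun h => ?_, fun h => ?_⟩⟩
  · refine hx (Finset.range (i + 1)) ∅ (by simp) ?_
    have := (heval (fun _ => True) (by simp) (i + 1) i (by omega)).1 trivial
    simpa using this.trans h
  · refine hx ∅ (Finset.range (i + 1)) (by simp) ?_
    have := (heval (fun _ => False) (by simp) (i + 1) i (by omega)).2 id
    simpa using h.trans this
  · rcases lt_trichotomy i j with hlt | rfl | hgt
    · exact (hmono j i hlt).1 h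
    · exact le_rfl
    · exact (hmono i j hgt).2 h
  · by_contra hr
    have hev := heval (r i) (fun a b hab ha => htrans _ _ _ ha hab) (max i j + 1)
    exact hx _ _ (Finset.disjoint_filter_filter_not _ _ _)
      (((hev i (by omega)).1 (hrefl i)).trans (h.trans ((hev j (by omega)).2 hr)))

/-- Sufficient condition for a bounded lattice to embed every countable partial order. -/
theorem exists_embedding_of_eventually {y : ℕ → L} (hL : ¬ (⊤ : L) ≤ ⊥)
    (hy : ∀ a b : L, ¬ a ≤ b → ∀ᶠ n in Filter.atTop, ¬ a ⊓ y n ≤ b ∧ ¬ a ≤ y n ⊔ b)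
    (P : Type*) [Countable P] [Preorder P] :
    ∃ f : P → L, (∀ p, ¬ f p ≤ ⊥ ∧ ¬ ⊤ ≤ f p) ∧ ∀ p q, p ≤ q ↔ f p ≤ f q := by
  cases isEmpty_or_nonempty P
  · exact ⟨isEmptyElim, isEmptyElim, isEmptyElim⟩
  obtain ⟨x, hx⟩ := exists_independent_seq hL hy
  obtain ⟨g, hg⟩ := exists_surjective_nat P
  obtain ⟨f, hf, hfr⟩ := exists_embedding_nat_of_independent hx (fun i j => g i ≤ g j)
    (fun _ => le_rfl) (fun _ _ _ => le_trans)
  refine ⟨f ∘ Function.surjInv hg, fun p => hf _, fun p q => ?_⟩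
  rw [Function.comp_apply, Function.comp_apply, ← hfr, Function.surjInv_eq hg,
    Function.surjInv_eq hg]

end Lattice

theorem toAntisymmetrization_le_iff_le_ofAntisymmetrization {α : Type*} [Preorder α] {a : α}
    {c : Antisymmetrization α (· ≤ ·)} :
    toAntisymmetrization _ a ≤ c ↔ a ≤ ofAntisymmetrization _ c := by
  conv_lhs => rw [← toAntisymmetrization_ofAntisymmetrization _ c]
  exact toAntisymmetrization_le_toAntisymmetrization_iff

theorem le_toAntisymmetrization_iff_ofAntisymmetrization_le {α : Type*} [Preorder α] {a : α}
    {c : Antisymmetrization α (· ≤ ·)} :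
    c ≤ toAntisymmetrization _ a ↔ ofAntisymmetrization _ c ≤ a := by
  conv_lhs => rw [← toAntisymmetrization_ofAntisymmetrization _ c]
  exact toAntisymmetrization_le_toAntisymmetrization_iff

/-- The lattice of equivalence classes of a preorder with binary suprema and infima. -/
noncomputable abbrev Antisymmetrization.latticeOfBounds {α : Type*} [Preorder α]
    (sup inf : α → α → α) (hsup : ∀ a b c, sup a b ≤ c ↔ a ≤ c ∧ b ≤ c)
    (hinf : ∀ a b c, c ≤ inf a b ↔ c ≤ a ∧ c ≤ b) :
    Lattice (Antisymmetrization α (· ≤ ·)) where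
  sup a b := toAntisymmetrization _ (sup (ofAntisymmetrization _ a) (ofAntisymmetrization _ b))
  inf a b := toAntisymmetrization _ (inf (ofAntisymmetrization _ a) (ofAntisymmetrization _ b))
  le_sup_left _ _ :=
    le_toAntisymmetrization_iff_ofAntisymmetrization_le.2 ((hsup _ _ _).1 le_rfl).1
  le_sup_right _ _ :=
    le_toAntisymmetrization_iff_ofAntisymmetrization_le.2 ((hsup _ _ _).1 le_rfl).2
  sup_le _ _ _ hac hbc := toAntisymmetrization_le_iff_le_ofAntisymmetrization.2 <| (hsup _ _ _).2
    ⟨ofAntisymmetrization_le_ofAntisymmetrization_iff.2 hac,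
      ofAntisymmetrization_le_ofAntisymmetrization_iff.2 hbc⟩
  inf_le_left _ _ :=
    toAntisymmetrization_le_iff_le_ofAntisymmetrization.2 ((hinf _ _ _).1 le_rfl).1
  inf_le_right _ _ :=
    toAntisymmetrization_le_iff_le_ofAntisymmetrization.2 ((hinf _ _ _).1 le_rfl).2
  le_inf _ _ _ hca hcb := le_toAntisymmetrization_iff_ofAntisymmetrization_le.2 <|
    (hinf _ _ _).2 ⟨ofAntisymmetrization_le_ofAntisymmetrization_iff.2 hca,
      ofAntisymmetrization_le_ofAntisymmetrization_iff.2 hcb⟩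

/-- Sufficient condition for a bounded preorder with binary suprema and infima to embed every
countable preorder. -/
theorem exists_embedding_of_eventually_of_preorder {α : Type*} [Preorder α] [BoundedOrder α]
    (sup inf : α → α → α) (hsup : ∀ a b c, sup a b ≤ c ↔ a ≤ c ∧ b ≤ c)
    (hinf : ∀ a b c, c ≤ inf a b ↔ c ≤ a ∧ c ≤ b) {y : ℕ → α} (hα : ¬ (⊤ : α) ≤ ⊥)
    (hy : ∀ a b : α, ¬ a ≤ b → ∀ᶠ n in Filter.atTop, ¬ inf a (y n) ≤ b ∧ ¬ a ≤ sup (y n) b)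
    (P : Type*) [Countable P] [Preorder P] :
    ∃ f : P → α, (∀ p, ¬ f p ≤ ⊥ ∧ ¬ ⊤ ≤ f p) ∧ ∀ p q, p ≤ q ↔ f p ≤ f q := by
  let := Antisymmetrization.latticeOfBounds sup inf hsup hinf
  let : BoundedOrder (Antisymmetrization α (· ≤ ·)) :=
    { top := toAntisymmetrization _ ⊤
      bot := toAntisymmetrization _ ⊥
      le_top := fun _ => le_toAntisymmetrization_iff_ofAntisymmetrization_le.2 le_top
      bot_le := fun _ => toAntisymmetrization_le_iff_le_ofAntisymmetrization.2 bot_le }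
  obtain ⟨f, hf, hfr⟩ := exists_embedding_of_eventually
    (L := Antisymmetrization α (· ≤ ·)) (y := fun n => toAntisymmetrization _ (y n))
    (fun h => hα (toAntisymmetrization_le_toAntisymmetrization_iff.1 h))
    (fun a b hab => by
      rw [← ofAntisymmetrization_le_ofAntisymmetrization_iff] at hab
      filter_upwards [hy _ _ hab] with n hn
      refine ⟨fun h => hn.1 ?_, fun h => hn.2 ?_⟩
      · have hi := (hinf (ofAntisymmetrization _ a) (y n) _).1 le_rfl
        rw [← toAntisymmetrization_le_iff_le_ofAntisymmetrization]
        exact (le_inf (toAntisymmetrization_le_iff_le_ofAntisymmetrization.2 hi.1)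
          (toAntisymmetrization_le_toAntisymmetrization_iff.2 hi.2)).trans h
      · have hs := (hsup (y n) (ofAntisymmetrization _ b) _).1 le_rfl
        rw [← le_toAntisymmetrization_iff_ofAntisymmetrization_le]
        exact h.trans (sup_le (toAntisymmetrization_le_toAntisymmetrization_iff.2 hs.1)
          (le_toAntisymmetrization_iff_ofAntisymmetrization_le.2 hs.2))) P
  refine ⟨fun p => ofAntisymmetrization _ (f p), fun p => ⟨fun h => (hf p).1 ?_,
    fun h => (hf p).2 ?_⟩, fun p q => ?_⟩
  · exact le_toAntisymmetrization_iff_ofAntisymmetrization_le.2 h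
  · exact toAntisymmetrization_le_iff_le_ofAntisymmetrization.2 h
  · rw [hfr, ofAntisymmetrization_le_ofAntisymmetrization_iff]

/-! ### Intervals of the homomorphism order -/

/-- The categorical (tensor) product of two graphs. -/
def SimpleGraph.catProd {V W : Type*} (G : SimpleGraph V) (H : SimpleGraph W) :
    SimpleGraph (V × W) where
  Adj a b := G.Adj a.1 b.1 ∧ H.Adj a.2 b.2
  symm := ⟨fun _ _ h => ⟨h.1.symm, h.2.symm⟩⟩
  loopless := ⟨fun _ h => h.1.ne rfl⟩

/-- The first projection of the categorical product. -/
def SimpleGraph.catProdFst {V W : Type*} {G : SimpleGraph V} {H : SimpleGraph W} :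
    G.catProd H →g G := ⟨Prod.fst, fun h => h.1⟩

/-- The second projection of the categorical product. -/
def SimpleGraph.catProdSnd {V W : Type*} {G : SimpleGraph V} {H : SimpleGraph W} :
    G.catProd H →g H := ⟨Prod.snd, fun h => h.2⟩

/-- The homomorphism into the categorical product with given coordinates. -/
def SimpleGraph.catProdLift {U V W : Type*} {G : SimpleGraph V} {H : SimpleGraph W}
    {I : SimpleGraph U} (f : I →g G) (g : I →g H) : I →g G.catProd H :=
  ⟨fun u => (f u, g u), fun h => ⟨f.map_adj h, g.map_adj h⟩⟩

/-- The homomorphism out of a disjoint sum with given restrictions. -/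
def SimpleGraph.sumElim {U V W : Type*} {G : SimpleGraph V} {H : SimpleGraph W}
    {I : SimpleGraph U} (f : G →g I) (g : H →g I) : (G ⊕g H) →g I where
  toFun := Sum.elim f g
  map_rel' {a b} h := by
    rcases a with a | a <;> rcases b with b | b
    · exact f.map_adj h
    · simp at h
    · simp at h
    · exact g.map_adj h

/-- A homomorphism from a product with a graph of large chromatic number yields one from the other
factor. -/
theorem SimpleGraph.nonempty_hom_of_catProd_hom {U V W : Type*} [Fintype U] [Fintype V]
    {A : SimpleGraph U} {B : SimpleGraph V} {K : SimpleGraph W}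
    (hK : ¬ K.Colorable (Fintype.card V ^ Fintype.card U)) (f : A.catProd K →g B) :
    Nonempty (A →g B) := by
  classical
  by_contra hAB
  refine hK ?_
  rw [← Fintype.card_fun]
  refine (SimpleGraph.Coloring.mk (fun k u => f (u, k)) fun {k k'} hk he => hAB ?_).colorable
  refine ⟨⟨fun u => f (u, k), fun {u v} huv => ?_⟩⟩
  have h : B.Adj (f (u, k)) (f (v, k')) := f.map_adj ⟨huv, hk⟩
  have hf : f (v, k) = f (v, k') := congrFun he v
  rwa [← hf] at h

/-- A homomorphism into a disjoint sum with a graph without short odd closed walks can be changed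
to avoid that summand. -/
theorem SimpleGraph.nonempty_hom_of_hom_sum {U V W : Type*} [Fintype U]
    {A : SimpleGraph U} {B : SimpleGraph V} {K : SimpleGraph W}
    (hK : ∀ (u : W) (p : K.Walk u u), p.length ≤ 2 * Fintype.card U → Even p.length)
    {b b' : V} (hb : B.Adj b b') (f : A →g (K ⊕g B)) : Nonempty (A →g B) := by
  classical
  let s : Set U := {u | (f u).isLeft}
  let g : A.induce s →g K :=
    { toFun := fun u => (f u).getLeft u.2
      map_rel' := by
        rintro ⟨u, hu⟩ ⟨v, hv⟩ huv
        have h : (K ⊕g B).Adj (f u) (f v) := f.map_adj huv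
        obtain ⟨a, ha⟩ := Sum.isLeft_iff.1 hu
        obtain ⟨c, hc⟩ := Sum.isLeft_iff.1 hv
        simp only [ha, hc] at h ⊢
        simpa using h }
  obtain ⟨c⟩ : (A.induce s).Colorable 2 :=
    SimpleGraph.colorable_two_of_even_closed_walks _ fun u p hp => by
      have := hK _ (p.map g) (by
        rw [SimpleGraph.Walk.length_map]
        exact hp.trans (Nat.mul_le_mul_left 2 (Fintype.card_subtype_le _)))
      rwa [SimpleGraph.Walk.length_map] at this
  refine ⟨⟨fun u => if h : u ∈ s then (if c ⟨u, h⟩ = 0 then b else b')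
    else (f u).getRight (by simpa [s] using h), fun {u v} huv => ?_⟩⟩
  have h : (K ⊕g B).Adj (f u) (f v) := f.map_adj huv
  have hs : ∀ w ∉ s, ∃ a, f w = Sum.inr a := fun w hw => by
    rw [← Sum.isRight_iff, ← Sum.not_isLeft]
    exact hw
  have hs' : ∀ w ∈ s, ∃ a, f w = Sum.inl a := fun w hw => Sum.isLeft_iff.1 hw
  by_cases hu : u ∈ s <;> by_cases hv : v ∈ s
  · have hc : c ⟨u, hu⟩ ≠ c ⟨v, hv⟩ := c.valid huv
    simp only [hu, hv, dif_pos]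
    split_ifs with h0 h1 h1
    · exact absurd (h0.trans h1.symm) hc
    · exact hb
    · exact hb.symm
    · omega
  · obtain ⟨a, ha⟩ := hs' u hu
    obtain ⟨d, hd⟩ := hs v hv
    simp [ha, hd] at h
  · obtain ⟨a, ha⟩ := hs u hu
    obtain ⟨d, hd⟩ := hs' v hv
    simp [ha, hd] at h
  · simp only [hu, hv, dif_neg, not_false_eq_true]
    obtain ⟨a, ha⟩ := hs u hu
    obtain ⟨d, hd⟩ := hs v hv
    simp only [ha, hd] at h ⊢
    simpa using h

/-- Finite graphs lying between `G₁` and `G₂` in the homomorphism order. -/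
structure IntervalGraph {V₁ V₂ : Type} (G₁ : SimpleGraph V₁) (G₂ : SimpleGraph V₂) where
  /-- The vertex type. -/
  V : Type
  /-- The vertex type is finite. -/
  fintype : Fintype V
  /-- The underlying graph. -/
  graph : SimpleGraph V
  fromLower : Nonempty (G₁ →g graph)
  toUpper : Nonempty (graph →g G₂)

namespace IntervalGraph

variable {V₁ V₂ : Type} {G₁ : SimpleGraph V₁} {G₂ : SimpleGraph V₂}

attribute [instance] IntervalGraph.fintype

instance : Preorder (IntervalGraph G₁ G₂) where
  le A B := Nonempty (A.graph →g B.graph)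
  le_refl A := ⟨SimpleGraph.Hom.id⟩
  le_trans _ _ _ := fun ⟨f⟩ ⟨g⟩ => ⟨g.comp f⟩

/-- The disjoint sum, a least upper bound. -/
def sum (A B : IntervalGraph G₁ G₂) : IntervalGraph G₁ G₂ where
  V := A.V ⊕ B.V
  fintype := inferInstance
  graph := A.graph ⊕g B.graph
  fromLower := A.fromLower.map SimpleGraph.Embedding.sumInl.toHom.comp
  toUpper := A.toUpper.map2 SimpleGraph.sumElim B.toUpper

/-- The categorical product, a greatest lower bound. -/
def prod (A B : IntervalGraph G₁ G₂) : IntervalGraph G₁ G₂ where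
  V := A.V × B.V
  fintype := inferInstance
  graph := A.graph.catProd B.graph
  fromLower := A.fromLower.map2 SimpleGraph.catProdLift B.fromLower
  toUpper := A.toUpper.map fun f => f.comp SimpleGraph.catProdFst

theorem sum_le_iff (A B C : IntervalGraph G₁ G₂) : A.sum B ≤ C ↔ A ≤ C ∧ B ≤ C :=
  ⟨fun ⟨f⟩ => ⟨⟨f.comp SimpleGraph.Embedding.sumInl.toHom⟩,
    ⟨f.comp SimpleGraph.Embedding.sumInr.toHom⟩⟩, fun ⟨⟨f⟩, ⟨g⟩⟩ => ⟨SimpleGraph.sumElim f g⟩⟩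

theorem le_prod_iff (A B C : IntervalGraph G₁ G₂) : C ≤ A.prod B ↔ C ≤ A ∧ C ≤ B :=
  ⟨fun ⟨f⟩ => ⟨⟨SimpleGraph.catProdFst.comp f⟩, ⟨SimpleGraph.catProdSnd.comp f⟩⟩,
    fun ⟨⟨f⟩, ⟨g⟩⟩ => ⟨SimpleGraph.catProdLift f g⟩⟩

end IntervalGraph

/-- The interval between `G₁` and `G₂` is universal if `G₁` has an edge and `G₂` has no
homomorphism to `G₁`. -/
theorem exists_hom_embedding_of_adj {V₁ V₂ : Type} [Fintype V₁] [Fintype V₂]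
    {G₁ : SimpleGraph V₁} {G₂ : SimpleGraph V₂} {v w : V₁} (hvw : G₁.Adj v w)
    (h₁₂ : Nonempty (G₁ →g G₂)) (h₂₁ : ¬ Nonempty (G₂ →g G₁))
    (P : Type*) [Countable P] [Preorder P] :
    ∃ (W : P → Type) (_ : ∀ p, Fintype (W p)) (H : ∀ p, SimpleGraph (W p)),
      (∀ p : P, Nonempty (G₁ →g H p) ∧ Nonempty (H p →g G₂) ∧
        ¬ Nonempty (H p →g G₁) ∧ ¬ Nonempty (G₂ →g H p)) ∧
      (∀ p q : P, p ≤ q ↔ Nonempty (H p →g H q)) := by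
  choose K _ G hcol hodd using exists_not_colorable_even_closed_walks
  let : BoundedOrder (IntervalGraph G₁ G₂) :=
    { top := ⟨V₂, inferInstance, G₂, h₁₂, ⟨SimpleGraph.Hom.id⟩⟩
      bot := ⟨V₁, inferInstance, G₁, ⟨SimpleGraph.Hom.id⟩, h₁₂⟩
      le_top := fun A => A.toUpper
      bot_le := fun A => A.fromLower }
  let y : ℕ → IntervalGraph G₁ G₂ := fun n =>
    { V := V₁ ⊕ (K n × V₂)
      fintype := inferInstance
      graph := G₁ ⊕g (G n).catProd G₂
      fromLower := ⟨SimpleGraph.Embedding.sumInl.toHom⟩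
      toUpper := h₁₂.map fun f => SimpleGraph.sumElim f SimpleGraph.catProdSnd }
  obtain ⟨f, hf, hfr⟩ := exists_embedding_of_eventually_of_preorder
    IntervalGraph.sum IntervalGraph.prod IntervalGraph.sum_le_iff IntervalGraph.le_prod_iff
    (y := y) h₂₁ (fun A B hAB => by
      filter_upwards [Filter.eventually_ge_atTop (Fintype.card B.V ^ Fintype.card A.V),
        Filter.eventually_ge_atTop (2 * Fintype.card A.V)] with n hn hn'
      obtain ⟨a⟩ := A.toUpper
      obtain ⟨b⟩ := B.fromLower
      refine ⟨fun ⟨g⟩ => hAB ?_, fun ⟨g⟩ => hAB ?_⟩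
      · refine SimpleGraph.nonempty_hom_of_catProd_hom (K := G n)
          (fun h => hcol n (h.mono hn)) (g.comp (SimpleGraph.catProdLift SimpleGraph.catProdFst
            (SimpleGraph.Embedding.sumInr.toHom.comp (SimpleGraph.catProdLift
              SimpleGraph.catProdSnd (a.comp SimpleGraph.catProdFst)))))
      · refine SimpleGraph.nonempty_hom_of_hom_sum (K := G n)
          (fun u p hp => hodd n u p (hp.trans hn')) (b.map_adj hvw)
          ((SimpleGraph.sumElim (SimpleGraph.sumElim
            (SimpleGraph.Embedding.sumInr.toHom.comp b)
            (SimpleGraph.Embedding.sumInl.toHom.comp SimpleGraph.catProdFst))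
            SimpleGraph.Embedding.sumInr.toHom).comp g)) P
  exact ⟨fun p => (f p).V, fun p => (f p).fintype, fun p => (f p).graph,
    fun p => ⟨(f p).fromLower, (f p).toUpper, (hf p).1, (hf p).2⟩, hfr⟩

theorem hom_order_fractal {V₁ V₂ : Type} [Fintype V₁] [Fintype V₂] [Nonempty V₁]
    (G₁ : SimpleGraph V₁) (G₂ : SimpleGraph V₂)
    (h₁₂ : Nonempty (G₁ →g G₂)) (h₂₁ : ¬ Nonempty (G₂ →g G₁))
    (hgap : ¬ (G₁.edgeSet = ∅ ∧ G₂.Colorable 2))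
    (P : Type*) [Countable P] [PartialOrder P] :
    ∃ (W : P → Type) (_ : ∀ p, Fintype (W p)) (H : ∀ p, SimpleGraph (W p)),
      (∀ p : P, Nonempty (G₁ →g H p) ∧ Nonempty (H p →g G₂) ∧
        ¬ Nonempty (H p →g G₁) ∧ ¬ Nonempty (G₂ →g H p)) ∧
      (∀ p q : P, p ≤ q ↔ Nonempty (H p →g H q)) := by
  by_cases he : G₁.edgeSet = ∅
  · have hG₂ : ¬ G₂.Colorable 2 := fun h => hgap ⟨he, h⟩
    have hbot : G₁ = ⊥ := SimpleGraph.edgeSet_eq_empty.1 he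
    obtain ⟨a, b, hab⟩ : ∃ a b, G₂.Adj a b := by
      by_contra! hno
      exact h₂₁ ⟨⟨fun _ => Classical.arbitrary V₁, fun {a b} h => absurd h (hno a b)⟩⟩
    have hK : (⊤ : SimpleGraph (Fin 2)).Adj 0 1 := by simp
    have hKG : Nonempty ((⊤ : SimpleGraph (Fin 2)) →g G₂) := by
      refine ⟨⟨fun i => if i = 0 then a else b, fun {i j} hij => ?_⟩⟩
      fin_cases i <;> fin_cases j <;> simp_all [hab.symm]
    obtain ⟨W, hW, H, hH, hPH⟩ := exists_hom_embedding_of_adj hK hKG hG₂ P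
    refine ⟨W, hW, H, fun p => ?_, hPH⟩
    obtain ⟨⟨f⟩, hp₂, -, hp₂'⟩ := hH p
    refine ⟨⟨⟨fun _ => f 0, fun {x y} h => ?_⟩⟩, hp₂, fun ⟨g⟩ => ?_, hp₂'⟩
    · simp [hbot] at h
    · have := g.map_adj (f.map_adj hK)
      simp [hbot] at this
  · obtain ⟨e, he⟩ := Set.nonempty_iff_ne_empty.2 he
    induction e with
    | _ v w => exact exists_hom_embedding_of_adj (G₁.mem_edgeSet.1 he) h₁₂ h₂₁ P
end

section
/- (Sparse Incomparability Lemma.) Let l be a positive integer and let G₁ and G₂ be finite simple non-bipartite graphs with G₁ ⟶ G₂ and not G₂ ⟶ G₁. Then there exists a finite connected simple graph F such that: F and G₁ are homomorphism-incomparable (not F ⟶ G₁ and not G₁ ⟶ F); F ⟶ G₂ and not G₂ ⟶ F; and F has girth at least l (F contains no cycle of length less than l). -/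
open Finset

namespace SimpleGraph

variable {V W : Type*}

/-- A walk that runs through a dart can be cut at that dart. -/
lemma Walk.exists_eq_append_cons_of_mem_darts {G : SimpleGraph V} {u v : V} (p : G.Walk u v)
    (d : G.Dart) (hd : d ∈ p.darts) :
    ∃ (p₁ : G.Walk u d.fst) (p₂ : G.Walk d.snd v), p = p₁.append (Walk.cons d.adj p₂) := by
  induction p with
  | nil => simp at hd
  | cons h p ih =>
    rw [Walk.darts_cons, List.mem_cons] at hd
    rcases hd with rfl | hd
    · exact ⟨Walk.nil, p, rfl⟩
    · obtain ⟨p₁, p₂, hp⟩ := ih hd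
      exact ⟨Walk.cons h p₁, p₂, by rw [hp, Walk.cons_append]⟩

/-- Joining two vertices that are far apart creates no short cycle. -/
lemma le_egirth_sup_edge {F : SimpleGraph W} {l : ℕ} (hF : (l : ℕ∞) ≤ F.egirth) {u w : W}
    (hfar : ∀ p : F.Walk u w, l ≤ p.length) : (l : ℕ∞) ≤ (F ⊔ edge u w).egirth := by
  rw [le_egirth] at hF ⊢
  intro a c hc
  have hedge : ∀ e ∈ c.edges, e ≠ s(u, w) → e ∈ F.edgeSet := by
    intro e he hne
    have := c.edges_subset_edgeSet he
    induction e with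
    | h x y =>
      simp only [mem_edgeSet, sup_adj, edge_adj] at this ⊢
      rcases this with h | ⟨⟨rfl, rfl⟩ | ⟨rfl, rfl⟩, -⟩
      · exact h
      · exact absurd rfl hne
      · exact absurd Sym2.eq_swap hne
  by_cases he : s(u, w) ∈ c.edges
  · rw [Walk.edges, List.mem_map] at he
    obtain ⟨d, hd, hde⟩ := he
    obtain ⟨p₁, p₂, hp⟩ := c.exists_eq_append_cons_of_mem_darts d hd
    have hnd := hc.edges_nodup
    rw [hp, Walk.edges_append, Walk.edges_cons, List.nodup_middle, List.nodup_cons,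
      show s(d.fst, d.snd) = s(u, w) from hde] at hnd
    have hmem : ∀ e ∈ (p₂.append p₁).edges, e ∈ F.edgeSet := by
      intro e he
      have he' : e ∈ p₁.edges ++ p₂.edges := by
        rw [Walk.edges_append] at he
        simpa [or_comm] using he
      refine hedge e ?_ fun h => hnd.1 (h ▸ he')
      rw [hp, Walk.edges_append, Walk.edges_cons]
      simp only [List.mem_append, List.mem_cons] at he' ⊢
      tauto
    have hlen : l ≤ (p₂.append p₁).length := by
      rw [← Walk.length_transfer _ hmem]
      generalize (p₂.append p₁).transfer F hmem = r
      have hde' : s(d.fst, d.snd) = s(u, w) := hde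
      rcases Sym2.eq_iff.1 hde' with ⟨h₁, h₂⟩ | ⟨h₁, h₂⟩
      · have := hfar (r.reverse.copy h₁ h₂)
        simpa using this
      · have := hfar (r.copy h₂ h₁)
        simpa using this
    rw [hp]
    simp only [Walk.length_append, Walk.length_cons] at hlen ⊢
    norm_cast
    omega
  · have hmem : ∀ e ∈ c.edges, e ∈ F.edgeSet := fun e h => hedge e h fun h' => he (h' ▸ h)
    simpa using hF a _ (hc.transfer hmem)

/-- A graph with fewer vertices than the girth of `F` maps to `F` only if it is bipartite. -/
lemma colorable_two_of_hom_of_card_lt_egirth [Fintype V] {G : SimpleGraph V} {F : SimpleGraph W}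
    (g : G →g F) (hF : (Fintype.card V : ℕ∞) < F.egirth) : G.Colorable 2 := by
  classical
  let s : Set W := Set.range g
  have hac : (F.induce s).IsAcyclic := by
    intro v c hc
    have hcF := hc.map (f := (Embedding.induce (G := F) s).toHom)
      (Embedding.induce (G := F) s).injective
    have h₁ := le_egirth.1 le_rfl _ _ hcF
    have h₂ : c.length ≤ Fintype.card s := by
      have h := hc.support_nodup.length_le_card
      simpa using h
    have h₃ : Fintype.card s ≤ Fintype.card V := Fintype.card_range_le g
    rw [Walk.length_map] at h₁
    have := hF.trans_le h₁
    norm_cast at this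
    omega
  let g' : G →g F.induce s := ⟨fun v => ⟨g v, v, rfl⟩, fun h => g.map_rel h⟩
  exact hac.colorable_two.of_hom g'

/-- If every component of `F` maps to `G`, then so does `F`. -/
lemma nonempty_hom_of_forall_connectedComponent {G : SimpleGraph V} {F : SimpleGraph W}
    (h : ∀ C : F.ConnectedComponent, Nonempty (C.toSimpleGraph →g G)) : Nonempty (F →g G) := by
  let f := fun C => (h C).some
  refine ⟨⟨fun v => f (F.connectedComponentMk v) ⟨v, rfl⟩, ?_⟩⟩
  have key : ∀ (C : F.ConnectedComponent) (v : W) (hv : F.connectedComponentMk v = C),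
      f (F.connectedComponentMk v) ⟨v, rfl⟩ = f C ⟨v, hv⟩ := by
    rintro _ v rfl
    rfl
  intro a b hab
  have hC : F.connectedComponentMk b = F.connectedComponentMk a :=
    ConnectedComponent.sound hab.symm.reachable
  rw [key _ b hC]
  exact (f _).map_rel hab

open Classical in
/-- In a graph of maximum degree at most `Δ`, balls of radius `r` have at most `(Δ + 1) ^ r`
vertices. -/
lemma card_walk_length_le [Fintype W] {F : SimpleGraph W} {Δ : ℕ} (hΔ : ∀ v, F.degree v ≤ Δ)
    (r : ℕ) (u : W) :
    #{w | ∃ p : F.Walk u w, p.length ≤ r} ≤ (Δ + 1) ^ r := by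
  induction r generalizing u with
  | zero =>
    rw [pow_zero, card_le_one]
    simp only [mem_filter, mem_univ, true_and, Nat.le_zero]
    rintro a ⟨p, hp⟩ b ⟨p', hp'⟩
    exact (Walk.eq_of_length_eq_zero hp).symm.trans (Walk.eq_of_length_eq_zero hp')
  | succ r ih =>
    have hsub : ({w | ∃ p : F.Walk u w, p.length ≤ r + 1} : Finset W) ⊆
        insert u ((F.neighborFinset u).biUnion fun v => {w | ∃ p : F.Walk v w, p.length ≤ r}) := by
      intro w hw
      simp only [mem_filter, mem_univ, true_and] at hw
      obtain ⟨p, hp⟩ := hw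
      cases p with
      | nil => simp
      | cons h p =>
        simp only [mem_insert, mem_biUnion, mem_neighborFinset, mem_filter, mem_univ, true_and]
        exact Or.inr ⟨_, h, p, by simpa using hp⟩
    calc _ ≤ _ := card_le_card hsub
      _ ≤ _ := card_insert_le _ _
      _ ≤ F.degree u * (Δ + 1) ^ r + 1 :=
          Nat.add_le_add_right (card_biUnion_le_card_mul _ _ _ fun v _ => ih v) 1
      _ ≤ Δ * (Δ + 1) ^ r + (Δ + 1) ^ r :=
          Nat.add_le_add (Nat.mul_le_mul_right _ (hΔ u)) (Nat.one_le_pow _ _ Δ.succ_pos)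
      _ = (Δ + 1) ^ (r + 1) := by ring

/-- Adding an edge raises the degree of its endpoints by at most one. -/
lemma degree_sup_edge_le [DecidableEq W] (F : SimpleGraph W) (u w v : W)
    [Fintype (F.neighborSet v)]
    {_ : Fintype ((F ⊔ edge u w).neighborSet v)} :
    (F ⊔ edge u w).degree v ≤ F.degree v + ((if v = u then 1 else 0) + if v = w then 1 else 0) := by
  have hsub : (F ⊔ edge u w).neighborFinset v ⊆ F.neighborFinset v ∪
      ((if v = u then {w} else ∅) ∪ if v = w then {u} else ∅) := by
    intro x hx
    simp only [mem_neighborFinset, sup_adj, edge_adj, mem_union] at hx ⊢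
    rcases hx with h | ⟨⟨rfl, rfl⟩ | ⟨rfl, rfl⟩, -⟩ <;> simp_all
  refine (card_le_card hsub).trans ((card_union_le _ _).trans ?_)
  refine Nat.add_le_add_left ((card_union_le _ _).trans ?_) _
  gcongr <;> split_ifs <;> simp

end SimpleGraph

/-- If every element of `H` is related to at least `q > 0` elements of `P`, then some element of
`P` is related to at least a `q / #P` fraction of `H`. -/
lemma Finset.exists_mul_card_le_card_mul_card_filter {α β : Type*} (H : Finset α) (P : Finset β)
    (r : α → β → Prop) [∀ a b, Decidable (r a b)] {q : ℕ} (hq : 0 < q) (hH : H.Nonempty)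
    (h : ∀ a ∈ H, q ≤ #{b ∈ P | r a b}) :
    ∃ b ∈ P, q * #H ≤ #P * #{a ∈ H | r a b} := by
  have hP : P.Nonempty := by
    obtain ⟨a, ha⟩ := hH
    have := card_pos.1 (hq.trans_le (h a ha))
    exact this.mono (filter_subset _ _)
  apply exists_le_of_sum_le hP
  rw [sum_const, smul_eq_mul, ← mul_sum]
  apply Nat.mul_le_mul_left
  have hdc := sum_card_bipartiteAbove_eq_sum_card_bipartiteBelow (s := H) (t := P) r
  simp only [bipartiteAbove, bipartiteBelow] at hdc
  rw [← hdc, mul_comm, ← smul_eq_mul]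
  exact card_nsmul_le_sum _ _ _ h

namespace SimpleGraph

variable {V W : Type*}

open Classical in
/-- In a graph of bounded degree with few saturated vertices, any two large vertex sets span many
pairs of unsaturated vertices at distance at least `l`. -/
lemma mul_self_le_card_filter_far [Fintype W] {F : SimpleGraph W} {Δ l q : ℕ}
    (hΔ : ∀ v, F.degree v ≤ Δ) (hS : #{v | Δ ≤ F.degree v} ≤ q) (hq : (Δ + 1) ^ l ≤ q)
    {A B : Finset W} (hA : 2 * q ≤ #A) (hB : 3 * q ≤ #B) :
    q * q ≤ #{p ∈ A ×ˢ B | F.degree p.1 < Δ ∧ F.degree p.2 < Δ ∧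
      ∀ c : F.Walk p.1 p.2, l ≤ c.length} := by
  set S : Finset W := {v | Δ ≤ F.degree v} with hSdef
  let N : W → Finset W := fun u => {w | ∃ p : F.Walk u w, p.length ≤ l}
  have hAS : q ≤ #(A \ S) := by
    have := le_card_sdiff S A
    omega
  have hBS : ∀ a, q ≤ #((B \ S) \ N a) := by
    intro a
    have h₁ := le_card_sdiff S B
    have h₂ := le_card_sdiff (N a) (B \ S)
    have h₃ : #(N a) ≤ _ := card_walk_length_le hΔ l a
    omega
  calc q * q ≤ #(A \ S) * q := Nat.mul_le_mul_right _ hAS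
    _ ≤ ∑ a ∈ A \ S, #((B \ S) \ N a) := by
        rw [← smul_eq_mul]
        exact card_nsmul_le_sum _ _ _ fun a _ => hBS a
    _ = #((A \ S).sigma fun a => (B \ S) \ N a) := (card_sigma _ _).symm
    _ ≤ _ := by
        refine card_le_card_of_injOn (fun x => (x.1, x.2)) ?_ ?_
        · rintro ⟨a, b⟩ h
          simp only [SetLike.mem_coe, mem_sigma, mem_sdiff, mem_filter, mem_univ, true_and,
            hSdef, N, not_le, not_exists, mem_product] at h ⊢
          exact ⟨⟨h.1.1, h.2.1.1⟩, h.1.2, h.2.1.2, fun c => (h.2.2 c).le⟩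
        · rintro ⟨a, b⟩ - ⟨a', b'⟩ - h
          simp only [Prod.mk.injEq] at h
          obtain ⟨rfl, rfl⟩ := h
          rfl

open Classical in
/-- If `G₂` has no homomorphism to `G₁`, then every map from a blow-up of `G₂` to `G₁` fails to
preserve adjacency between two large sets lying over adjacent vertices of `G₂`. -/
lemma exists_large_nonadjacent {V₁ V₂ : Type*} [Fintype V₁] [Nonempty V₁] [Fintype V₂]
    {G₁ : SimpleGraph V₁} {G₂ : SimpleGraph V₂} (h₂₁ : ¬ Nonempty (G₂ →g G₁)) {n s : ℕ}
    (hn : Fintype.card V₁ * s ≤ n) (f : V₂ × Fin n → V₁) :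
    ∃ A B : Finset (V₂ × Fin n), s ≤ #A ∧ s ≤ #B ∧
      ∀ a ∈ A, ∀ b ∈ B, G₂.Adj a.1 b.1 ∧ ¬ G₁.Adj (f a) (f b) := by
  have hmaj : ∀ x : V₂, ∃ α : V₁, s ≤ #{i : Fin n | f (x, i) = α} := fun x =>
    Fintype.exists_le_card_fiber_of_mul_le_card (fun i => f (x, i)) (by simpa using hn)
  choose g hg using hmaj
  have : ∃ x y, G₂.Adj x y ∧ ¬ G₁.Adj (g x) (g y) := by
    by_contra! h
    exact h₂₁ ⟨⟨g, fun hab => h _ _ hab⟩⟩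
  obtain ⟨x, y, hxy, hg'⟩ := this
  refine ⟨image (Prod.mk x) {i : Fin n | f (x, i) = g x},
    image (Prod.mk y) {i : Fin n | f (y, i) = g y}, ?_, ?_, ?_⟩
  · rw [card_image_of_injective _ (Prod.mk_right_injective x)]
    exact hg x
  · rw [card_image_of_injective _ (Prod.mk_right_injective y)]
    exact hg y
  · intro a ha b hb
    simp only [mem_image, mem_filter, mem_univ, true_and] at ha hb
    obtain ⟨i, hi, rfl⟩ := ha
    obtain ⟨j, hj, rfl⟩ := hb
    exact ⟨hxy, by rwa [hi, hj]⟩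

open Classical in
/-- The maps from the vertices of `F` to the vertices of `G` that are homomorphisms. -/
noncomputable def homFinset [Fintype V] [Fintype W] (F : SimpleGraph W) (G : SimpleGraph V) :
    Finset (W → V) :=
  {f | ∀ a b, F.Adj a b → G.Adj (f a) (f b)}

open Classical in
lemma homFinset_sup_edge_subset [Fintype V] [Fintype W] (F : SimpleGraph W) (G : SimpleGraph V)
    {u w : W} (huw : u ≠ w) :
    homFinset (F ⊔ edge u w) G ⊆ homFinset F G \ {f ∈ homFinset F G | ¬ G.Adj (f u) (f w)} := by
  intro f hf
  simp only [homFinset, mem_filter, mem_univ, true_and, mem_sdiff, not_and, not_not] at hf ⊢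
  refine ⟨fun a b hab => hf a b (Or.inl hab), fun _ => hf u w (Or.inr ?_)⟩
  simp [edge_adj, huw]

open Classical in
/-- A sparse subgraph of a large blow-up of `G₂` can be enlarged by an edge which destroys a
definite proportion of its homomorphisms to `G₁`. -/
lemma exists_sup_edge_card_homFinset_le {V₁ V₂ : Type*} [Fintype V₁] [Nonempty V₁] [Fintype V₂]
    {G₁ : SimpleGraph V₁} {G₂ : SimpleGraph V₂} (h₂₁ : ¬ Nonempty (G₂ →g G₁))
    {l Δ q n : ℕ} (hq : (Δ + 1) ^ l ≤ q)
    (hn : n = Fintype.card V₁ * (3 * q)) {F : SimpleGraph (V₂ × Fin n)}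
    (hΔ : ∀ v, F.degree v ≤ Δ) (hS : #{v | Δ ≤ F.degree v} ≤ q)
    (hH : (homFinset F G₁).Nonempty) :
    ∃ u w : V₂ × Fin n, G₂.Adj u.1 w.1 ∧ F.degree u < Δ ∧ F.degree w < Δ ∧
      (∀ c : F.Walk u w, l ≤ c.length) ∧
      (3 * Fintype.card V₁ * Fintype.card V₂) ^ 2 * #(homFinset (F ⊔ edge u w) G₁) ≤
        ((3 * Fintype.card V₁ * Fintype.card V₂) ^ 2 - 1) * #(homFinset F G₁) := by
  have hq0 : 0 < q := (Nat.pow_pos (Nat.succ_pos Δ)).trans_le hq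
  let P : Finset ((V₂ × Fin n) × (V₂ × Fin n)) :=
    {p | G₂.Adj p.1.1 p.2.1 ∧ F.degree p.1 < Δ ∧ F.degree p.2 < Δ ∧
      ∀ c : F.Walk p.1 p.2, l ≤ c.length}
  have hkill : ∀ f ∈ homFinset F G₁, q * q ≤ #{p ∈ P | ¬ G₁.Adj (f p.1) (f p.2)} := by
    intro f _
    obtain ⟨A, B, hA, hB, hAB⟩ := exists_large_nonadjacent h₂₁ hn.ge f
    refine (mul_self_le_card_filter_far (A := A) hΔ hS hq (by omega) hB).trans (card_le_card ?_)
    intro p hp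
    simp only [mem_filter, mem_product, mem_univ, true_and, P] at hp ⊢
    have := hAB _ hp.1.1 _ hp.1.2
    exact ⟨⟨this.1, hp.2⟩, this.2⟩
  obtain ⟨⟨u, w⟩, hp, hle⟩ := exists_mul_card_le_card_mul_card_filter (homFinset F G₁) P
    (fun f p => ¬ G₁.Adj (f p.1) (f p.2)) (Nat.mul_pos hq0 hq0) hH hkill
  simp only [mem_filter, mem_univ, true_and, P] at hp
  refine ⟨u, w, hp.1, hp.2.1, hp.2.2.1, hp.2.2.2, ?_⟩
  have huw : u ≠ w := fun h => hp.1.ne (congrArg Prod.fst h)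
  have hsub := card_le_card (homFinset_sup_edge_subset F G₁ huw)
  rw [card_sdiff_of_subset (filter_subset _ _)] at hsub
  have hK := card_filter_le (homFinset F G₁) fun f => ¬ G₁.Adj (f u) (f w)
  set K := #{f ∈ homFinset F G₁ | ¬ G₁.Adj (f u) (f w)}
  set N := (3 * Fintype.card V₁ * Fintype.card V₂) ^ 2 with hN
  have hPcard : #P ≤ N * (q * q) := by
    refine (card_le_univ P).trans_eq ?_
    simp only [Fintype.card_prod, Fintype.card_fin, hn, hN]
    ring
  have hNK : #(homFinset F G₁) ≤ N * K := by
    refine Nat.le_of_mul_le_mul_left ?_ (Nat.mul_pos hq0 hq0)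
    calc q * q * #(homFinset F G₁) ≤ #P * K := hle
      _ ≤ N * (q * q) * K := Nat.mul_le_mul_right _ hPcard
      _ = q * q * (N * K) := by ring
  calc N * #(homFinset (F ⊔ edge u w) G₁) ≤ N * (#(homFinset F G₁) - K) :=
        Nat.mul_le_mul_left _ hsub
    _ = N * #(homFinset F G₁) - N * K := Nat.mul_sub _ _ _
    _ ≤ N * #(homFinset F G₁) - #(homFinset F G₁) := Nat.sub_le_sub_left hNK _
    _ = (N - 1) * #(homFinset F G₁) := by rw [Nat.sub_mul, one_mul]

open Classical in
/-- Adding edges greedily yields sparse subgraphs of a blow-up of `G₂` whose number of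
homomorphisms to `G₁` decays exponentially in the number of edges. -/
lemma exists_le_comap_card_homFinset_le {V₁ V₂ : Type*} [Fintype V₁] [Nonempty V₁] [Fintype V₂]
    {G₁ : SimpleGraph V₁} {G₂ : SimpleGraph V₂} (h₂₁ : ¬ Nonempty (G₂ →g G₁))
    {l Δ q n T : ℕ} (hq : (Δ + 1) ^ l ≤ q) (hn : n = Fintype.card V₁ * (3 * q))
    (hT : 2 * T < Δ * (q + 1)) (t : ℕ) (ht : t ≤ T) :
    ∃ F : SimpleGraph (V₂ × Fin n), F ≤ G₂.comap Prod.fst ∧ (l : ℕ∞) ≤ F.egirth ∧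
      (∀ v, F.degree v ≤ Δ) ∧ ∑ v, F.degree v ≤ 2 * t ∧
      ((3 * Fintype.card V₁ * Fintype.card V₂) ^ 2) ^ t * #(homFinset F G₁) ≤
        ((3 * Fintype.card V₁ * Fintype.card V₂) ^ 2 - 1) ^ t *
          Fintype.card V₁ ^ (Fintype.card V₂ * n) := by
  induction t with
  | zero =>
    refine ⟨⊥, bot_le, by simp, by simp, by simp, ?_⟩
    simpa using card_le_univ (homFinset (⊥ : SimpleGraph (V₂ × Fin n)) G₁)
  | succ t ih =>
    obtain ⟨F, hle, hg, hΔ, hsum, hcard⟩ := ih (by omega)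
    rcases (homFinset F G₁).eq_empty_or_nonempty with hH | hH
    · exact ⟨F, hle, hg, hΔ, by omega, by simp [hH]⟩
    have hS : #{v | Δ ≤ F.degree v} ≤ q := by
      have h₁ : #{v | Δ ≤ F.degree v} * Δ ≤ ∑ v, F.degree v :=
        calc _ ≤ ∑ v with Δ ≤ F.degree v, F.degree v := by
              rw [← smul_eq_mul]
              exact card_nsmul_le_sum _ _ _ fun v hv => (mem_filter.1 hv).2
          _ ≤ _ := sum_le_sum_of_subset (filter_subset _ _)
      by_contra! h₂
      have h₃ := Nat.mul_le_mul_right Δ (Nat.succ_le_of_lt h₂)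
      rw [Nat.succ_eq_add_one, mul_comm] at h₃
      omega
    obtain ⟨u, w, hadj, hu, hw, hfar, hdec⟩ :=
      exists_sup_edge_card_homFinset_le h₂₁ hq hn hΔ hS hH
    have huw : u ≠ w := fun h => hadj.ne (congrArg Prod.fst h)
    obtain ⟨F', hF'⟩ : ∃ F', F' = F ⊔ edge u w := ⟨_, rfl⟩
    have hdeg : ∀ v, F'.degree v ≤
        F.degree v + ((if v = u then 1 else 0) + if v = w then 1 else 0) := by
      subst hF'
      exact fun v => degree_sup_edge_le F u w v
    rw [← hF'] at hdec
    refine ⟨F', hF' ▸ sup_le hle ?_, hF' ▸ le_egirth_sup_edge hg hfar, ?_, ?_, ?_⟩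
    · intro a b hab
      rw [edge_adj] at hab
      rcases hab with ⟨⟨rfl, rfl⟩ | ⟨rfl, rfl⟩, -⟩
      · exact hadj
      · exact hadj.symm
    · intro v
      refine (hdeg v).trans ?_
      have := hΔ v
      split_ifs <;> subst_vars <;> first | omega | exact absurd rfl huw
    · refine (sum_le_sum fun v _ => hdeg v).trans ?_
      rw [sum_add_distrib, sum_add_distrib]
      simp only [sum_ite_eq', mem_univ, if_true]
      omega
    · set N := (3 * Fintype.card V₁ * Fintype.card V₂) ^ 2
      calc N ^ (t + 1) * #(homFinset F' G₁)
          = N ^ t * (N * #(homFinset F' G₁)) := by ring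
        _ ≤ N ^ t * ((N - 1) * #(homFinset F G₁)) := Nat.mul_le_mul_left _ hdec
        _ = (N - 1) * (N ^ t * #(homFinset F G₁)) := by ring
        _ ≤ (N - 1) * ((N - 1) ^ t * Fintype.card V₁ ^ (Fintype.card V₂ * n)) :=
            Nat.mul_le_mul_left _ hcard
        _ = _ := by ring

/-- Exponential decay beats any constant factor. -/
lemma _root_.Nat.exists_mul_pred_pow_lt_pow (c : ℕ) {N : ℕ} (hN : 0 < N) :
    ∃ d, c * (N - 1) ^ d < N ^ d := by
  rcases Nat.eq_zero_or_pos c with rfl | hc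
  · exact ⟨0, by simp⟩
  have hN' : (0 : ℝ) < N := by exact_mod_cast hN
  have hc' : (0 : ℝ) < c := by exact_mod_cast hc
  obtain ⟨d, hd⟩ := exists_pow_lt_of_lt_one (inv_pos.2 hc')
    (show ((N - 1 : ℕ) : ℝ) / N < 1 by
      rw [div_lt_one hN']
      exact_mod_cast Nat.sub_lt hN one_pos)
  refine ⟨d, ?_⟩
  rw [div_pow, div_lt_iff₀ (pow_pos hN' d), inv_mul_eq_div, lt_div_iff₀ hc', mul_comm] at hd
  exact_mod_cast hd

/-- Sparse version of `G₂`: if `G₂` does not map to `G₁`, then neither does some finite graph of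
large girth that maps to `G₂`. -/
lemma exists_le_egirth_hom_not_hom {V₁ V₂ : Type*} [Fintype V₁] [Nonempty V₁] [Fintype V₂]
    {G₁ : SimpleGraph V₁} {G₂ : SimpleGraph V₂} (h₂₁ : ¬ Nonempty (G₂ →g G₁)) (l : ℕ) :
    ∃ (n : ℕ) (F : SimpleGraph (V₂ × Fin n)), (l : ℕ∞) ≤ F.egirth ∧ Nonempty (F →g G₂) ∧
      ¬ Nonempty (F →g G₁) := by
  classical
  have hV₂ : Nonempty V₂ := by
    by_contra h
    rw [not_nonempty_iff] at h
    exact h₂₁ ⟨⟨fun v => isEmptyElim v, fun {a} => isEmptyElim a⟩⟩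
  have hk : 0 < Fintype.card V₁ := Fintype.card_pos
  have hm : 0 < Fintype.card V₂ := Fintype.card_pos
  set k := Fintype.card V₁ with hkdef
  set m := Fintype.card V₂ with hmdef
  have hN : 0 < (3 * k * m) ^ 2 := by positivity
  obtain ⟨d, hd⟩ := Nat.exists_mul_pred_pow_lt_pow (k ^ m) hN
  set Δ := 6 * d * k + 1 with hΔ
  set q := (Δ + 1) ^ l with hq
  set n := k * (3 * q) with hn
  have hq0 : 0 < q := by positivity
  have hn0 : n ≠ 0 := by positivity
  have hT : 2 * (d * n) < Δ * (q + 1) := by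
    rw [hn, hΔ]
    nlinarith [Nat.zero_le (6 * d * k)]
  obtain ⟨F, hle, hg, -, -, hcard⟩ :=
    exists_le_comap_card_homFinset_le h₂₁ hq.ge hn hT (d * n) le_rfl
  refine ⟨n, F, hg, ⟨⟨Prod.fst, fun h => hle h⟩⟩, ?_⟩
  rintro ⟨f⟩
  have hpos : 0 < #(homFinset F G₁) :=
    card_pos.2 ⟨f, by simpa [homFinset] using fun a b c e h => f.map_rel h⟩
  have hlt := Nat.pow_lt_pow_left hd hn0
  rw [mul_pow, ← pow_mul, ← pow_mul, ← pow_mul, mul_comm] at hlt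
  exact absurd (hcard.trans_lt hlt) (not_lt.2 (Nat.le_mul_of_pos_right _ hpos))

end SimpleGraph


/-- Sparse Incomparability Lemma: for any positive integer `l` and finite
non-bipartite graphs `G₁ < G₂` there is a finite connected graph `F` of girth
at least `l` which is incomparable with `G₁` and satisfies `F < G₂`. -/
theorem sparse_incomparability {V₁ V₂ : Type} [Fintype V₁] [Fintype V₂]
    (l : ℕ) (hl : 0 < l)
    (G₁ : SimpleGraph V₁) (G₂ : SimpleGraph V₂)
    (hnb₁ : ¬ G₁.Colorable 2) (hnb₂ : ¬ G₂.Colorable 2)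
    (h₁₂ : Nonempty (G₁ →g G₂)) (h₂₁ : ¬ Nonempty (G₂ →g G₁)) :
    ∃ (W : Type) (_ : Fintype W) (F : SimpleGraph W),
      F.Connected ∧
      ¬ Nonempty (F →g G₁) ∧ ¬ Nonempty (G₁ →g F) ∧
      Nonempty (F →g G₂) ∧ ¬ Nonempty (G₂ →g F) ∧
      (∀ (v : W) (c : F.Walk v v), c.IsCycle → l ≤ c.length) := by
  classical
  have hne₁ : Nonempty V₁ := by
    by_contra h
    rw [not_nonempty_iff] at h
    exact hnb₁ (.of_isEmpty 2)
  set L := max l (max (Fintype.card V₁) (Fintype.card V₂) + 1) with hL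
  obtain ⟨n, F, hF, ⟨g⟩, hF₁⟩ := SimpleGraph.exists_le_egirth_hom_not_hom h₂₁ L
  obtain ⟨C, hC⟩ : ∃ C : F.ConnectedComponent, ¬ Nonempty (C.toSimpleGraph →g G₁) := by
    by_contra! h
    exact hF₁ (SimpleGraph.nonempty_hom_of_forall_connectedComponent h)
  have hlt : ∀ m < L, (m : ℕ∞) < F.egirth := fun m hm =>
    lt_of_lt_of_le (by exact_mod_cast hm) hF
  refine ⟨C, Fintype.ofFinite _, C.toSimpleGraph, C.connected_toSimpleGraph, hC, ?_,
    ⟨g.comp C.toSimpleGraph_hom⟩, ?_, ?_⟩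
  · rintro ⟨f⟩
    exact hnb₁ (SimpleGraph.colorable_two_of_hom_of_card_lt_egirth
      (C.toSimpleGraph_hom.comp f) (hlt _ (by omega)))
  · rintro ⟨f⟩
    exact hnb₂ (SimpleGraph.colorable_two_of_hom_of_card_lt_egirth
      (C.toSimpleGraph_hom.comp f) (hlt _ (by omega)))
  · intro v c hc
    have h := SimpleGraph.le_egirth.1 hF _ _
      (hc.map (f := C.toSimpleGraph_hom) Subtype.val_injective)
    rw [SimpleGraph.Walk.length_map] at h
    exact (le_max_left _ _).trans (by exact_mod_cast h)
end
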